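/- arXiv:1706.09134 — 2 statements merged into one kernel-verified Lean document; each statement's English description precedes it below -/
import Mathlib

section
/- Let q ∈ k satisfy q^m = 1 with m minimal, and assume k contains all m-th roots of unity. Let f ∈ k(x,y) and suppose f = τ_{x,q}(g) − g + c with g ∈ k(x,y) and c ∈ k(y)(x^m). Then f is exact with respect to (τ_{x,q}, σ_y), i.e., f = Δ_{x,q}(u) + Δ_y(v) for some u, v ∈ k(x,y), if and only if c = Δ_y(d) for some d ∈ k(y)(x^m). -/
/-! Let `E = ∑_{j<m} τ^j`. Since `τ^m = 1`, `E` kills `τ u - u`; it commutes with `σ_y`, and it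
multiplies the elements of `K = k(y)(x^m)`, which `τ` fixes, by `m`. Applying `E` to an exact
expression for `f` therefore gives `m c = σ_y (E v) - E v`, and `d = E v / m` works as soon as
`E v ∈ K`. For this, `k(x,y) = K(x) = K[x]` because `x` is algebraic over `K`, and
`E (a x^i) = (∑_j q^{ij}) a x^i` for `a ∈ K`: this lies in `K` if `m ∣ i`, and the sum over the
roots of unity vanishes otherwise (`qTrace_mem`). -/

open Polynomial

noncomputable section

variable (k : Type*) [Field k] [CharZero k]

/-- `k(x,y)` realized as `k(x)(y)`: rational functions in `y` over `k(x) = RatFunc k`. -/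
abbrev F2 := RatFunc (RatFunc k)

/-- The element `x` of `k(x,y)`. -/
def Fx : F2 k := RatFunc.C RatFunc.X

/-- The element `y` of `k(x,y)`. -/
def Fy : F2 k := RatFunc.X

/-- The embedding of the constants `k` into `k(x,y)`. -/
def Fc : k →+* F2 k := RatFunc.C.comp RatFunc.C

/-- The embedding of `k(x)` into `k(x,y)`. -/
def FKx : RatFunc k →+* F2 k := RatFunc.C

/-- The embedding of `k(x)[y]` into `k(x,y)`. -/
def FP : Polynomial (RatFunc k) →+* F2 k := algebraMap _ _

/-- The embedding of `k[x,y]` (realized as `(k[x])[y]`, outer variable `y`) into `k(x)[y]`. -/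
def PP : Polynomial (Polynomial k) →+* Polynomial (RatFunc k) :=
  Polynomial.mapRingHom (algebraMap (Polynomial k) (RatFunc k))

/-- The embedding of `k[y]` into `k[x,y] = (k[x])[y]`. -/
def PY : Polynomial k →+* Polynomial (Polynomial k) :=
  Polynomial.mapRingHom Polynomial.C

/-- The embedding of `k[x,y]` into `k(x,y)`. -/
def FPP : Polynomial (Polynomial k) →+* F2 k := (FP k).comp (PP k)

/-- The embedding of `k[y]` into `k(x)[y]`. -/
def PYx : Polynomial k →+* Polynomial (RatFunc k) :=
  Polynomial.mapRingHom (algebraMap k (RatFunc k))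

variable {k}

/-- `σ` is the shift operator `σ_x : f(x,y) ↦ f(x+1,y)`, i.e. the automorphism of
`k(x,y)` fixing `k(y)` pointwise (equivalently, fixing the generators `k` and `y`)
and sending `x` to `x+1`. -/
def IsShiftX (σ : F2 k ≃+* F2 k) : Prop :=
  (∀ c : k, σ (Fc k c) = Fc k c) ∧ σ (Fy k) = Fy k ∧ σ (Fx k) = Fx k + 1

/-- `σ` is the `q`-shift operator `τ_{x,q} : f(x,y) ↦ f(qx,y)`, i.e. the automorphism of
`k(x,y)` fixing `k(y)` pointwise and sending `x` to `q·x`. -/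
def IsQShiftX (q : k) (σ : F2 k ≃+* F2 k) : Prop :=
  (∀ c : k, σ (Fc k c) = Fc k c) ∧ σ (Fy k) = Fy k ∧ σ (Fx k) = Fc k q * Fx k

/-- `σ` is the shift operator `σ_y : f(x,y) ↦ f(x,y+1)`, i.e. the automorphism of
`k(x,y)` fixing `k(x)` pointwise and sending `y` to `y+1`. -/
def IsShiftY (σ : F2 k ≃+* F2 k) : Prop :=
  (∀ c : k, σ (Fc k c) = Fc k c) ∧ σ (Fx k) = Fx k ∧ σ (Fy k) = Fy k + 1

/-- `D` is the partial derivation `D_y = ∂/∂y` on `k(x,y)`: the `k(x)`-linear derivation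
with `D(y) = 1`. -/
def IsDerivY (D : F2 k → F2 k) : Prop :=
  (∀ a b, D (a + b) = D a + D b) ∧ (∀ a b, D (a * b) = a * D b + D a * b) ∧
  (∀ c : RatFunc k, D (FKx k c) = 0) ∧ D (Fy k) = 1

/-- `q` is not a root of unity. -/
def NotRootOfUnity (q : k) : Prop := ∀ n : ℕ, 0 < n → q ^ n ≠ 1

variable (k) in
/-- The subfield `k(y)(x^m)` of `k(x,y)`, generated over `k` by `y` and `x^m`. -/
def kyxm (m : ℕ) : IntermediateField k (F2 k) :=
  IntermediateField.adjoin k {Fy k, (Fx k) ^ m}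

section Helpers

set_option linter.unusedSectionVars false

lemma algebraMap_eq_Fc (a : k) : algebraMap k (F2 k) a = Fc k a := by
  rw [IsScalarTower.algebraMap_apply k (RatFunc k) (F2 k)]
  simp [Fc, RatFunc.algebraMap_eq_C]

/-- The field `k(x,y)` is generated by `k`, `x` and `y`. -/
lemma mem_of_generators (S : Subfield (F2 k)) (hc : ∀ a, Fc k a ∈ S) (hx : Fx k ∈ S)
    (hy : Fy k ∈ S) (z : F2 k) : z ∈ S := by
  have hpx : ∀ p : k[X], (RatFunc.C (algebraMap k[X] (RatFunc k) p) : F2 k) ∈ S := by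
    intro p
    induction p using Polynomial.induction_on' with
    | add p r hp hr => rw [map_add, map_add]; exact add_mem hp hr
    | monomial n a =>
      rw [← Polynomial.C_mul_X_pow_eq_monomial]
      simp only [map_mul, map_pow, RatFunc.algebraMap_C, RatFunc.algebraMap_X]
      exact mul_mem (hc a) (pow_mem hx n)
  have hrx : ∀ r : RatFunc k, (RatFunc.C r : F2 k) ∈ S := by
    intro r
    rw [← RatFunc.num_div_denom r, map_div₀]
    exact div_mem (hpx _) (hpx _)
  have hpy : ∀ p : (RatFunc k)[X], algebraMap (RatFunc k)[X] (F2 k) p ∈ S := by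
    intro p
    induction p using Polynomial.induction_on' with
    | add p r hp hr => rw [map_add]; exact add_mem hp hr
    | monomial n a =>
      rw [← Polynomial.C_mul_X_pow_eq_monomial]
      simp only [map_mul, map_pow, RatFunc.algebraMap_C, RatFunc.algebraMap_X]
      exact mul_mem (hrx a) (pow_mem hy n)
  rw [← RatFunc.num_div_denom z]
  exact div_mem (hpy _) (hpy _)

lemma ringHom_ext_F2 (φ ψ : F2 k →+* F2 k) (hc : ∀ a, φ (Fc k a) = ψ (Fc k a))
    (hx : φ (Fx k) = ψ (Fx k)) (hy : φ (Fy k) = ψ (Fy k)) : φ = ψ :=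
  RingHom.ext fun z => mem_of_generators (φ.eqLocusField ψ) hc hx hy z

/-- `k(x,y) = K[x]` for `K = k(y)(x^m)`, because `x` is algebraic over `K`. -/
lemma mem_adjoin_Fx (m : ℕ) (hm : 0 < m) (z : F2 k) :
    z ∈ Algebra.adjoin (kyxm k m) {Fx k} := by
  have hint : IsIntegral (kyxm k m) (Fx k) := by
    have hxm : Fx k ^ m ∈ kyxm k m := IntermediateField.subset_adjoin _ _ (by simp)
    exact IsIntegral.of_pow hm
      (isIntegral_algebraMap (R := kyxm k m) (A := F2 k) (x := ⟨Fx k ^ m, hxm⟩))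
  rw [← IntermediateField.adjoin_simple_toSubalgebra_of_isAlgebraic hint.isAlgebraic]
  refine mem_of_generators
    (IntermediateField.adjoin (kyxm k m) {Fx k}).toSubfield (fun a => ?_) ?_ ?_ z
  · rw [← algebraMap_eq_Fc]
    exact (IntermediateField.adjoin (kyxm k m) {Fx k}).algebraMap_mem
      ⟨_, (kyxm k m).algebraMap_mem a⟩
  · exact IntermediateField.mem_adjoin_simple_self _ _
  · exact (IntermediateField.adjoin (kyxm k m) {Fx k}).algebraMap_mem
      ⟨Fy k, IntermediateField.subset_adjoin _ _ (by simp)⟩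

lemma qShift_fix (q : k) (m : ℕ) (hq : q ^ m = 1) (τ : F2 k ≃+* F2 k) (hτ : IsQShiftX q τ)
    (c : F2 k) (hc : c ∈ kyxm k m) : τ c = c := by
  induction hc using IntermediateField.adjoin_induction with
  | mem x hx =>
    rcases hx with rfl | rfl
    · exact hτ.2.1
    · rw [map_pow, hτ.2.2, mul_pow, ← map_pow, hq, map_one, one_mul]
  | algebraMap a => rw [algebraMap_eq_Fc, hτ.1]
  | add x y _ _ hx hy => rw [map_add, hx, hy]
  | inv x _ hx => rw [map_inv₀, hx]
  | mul x y _ _ hx hy => rw [map_mul, hx, hy]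

/-- The trace `∑_{j<m} τ^j z` of the action of `τ`; it is the sum over the cyclic group generated
by `τ` when `τ` has order `m`. -/
def qTrace (τ : F2 k ≃+* F2 k) (m : ℕ) (z : F2 k) : F2 k := ∑ j ∈ Finset.range m, τ^[j] z

lemma qTrace_add (τ : F2 k ≃+* F2 k) (m : ℕ) (z w : F2 k) :
    qTrace τ m (z + w) = qTrace τ m z + qTrace τ m w := by
  simp [qTrace, iterate_map_add, Finset.sum_add_distrib]

lemma qTrace_sub (τ : F2 k ≃+* F2 k) (m : ℕ) (z w : F2 k) :
    qTrace τ m (z - w) = qTrace τ m z - qTrace τ m w := by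
  simp [qTrace, iterate_map_sub, Finset.sum_sub_distrib]

lemma qShift_iterate_Fx (q : k) (τ : F2 k ≃+* F2 k) (hτ : IsQShiftX q τ) (j : ℕ) :
    τ^[j] (Fx k) = Fc k (q ^ j) * Fx k := by
  induction j with
  | zero => simp
  | succ j ih =>
    rw [Function.iterate_succ_apply', ih, map_mul, hτ.1, hτ.2.2, pow_succ, map_mul, mul_assoc]

lemma qShift_iterate_order (q : k) (m : ℕ) (hm : 0 < m) (hq : q ^ m = 1) (τ : F2 k ≃+* F2 k)
    (hτ : IsQShiftX q τ) (z : F2 k) : τ^[m] z = z := by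
  have hz := mem_adjoin_Fx m hm z
  induction hz using Algebra.adjoin_induction with
  | mem x hx =>
    rw [Set.mem_singleton_iff.mp hx, qShift_iterate_Fx q τ hτ, hq, map_one, one_mul]
  | algebraMap a => exact Function.iterate_fixed (qShift_fix q m hq τ hτ _ a.2) m
  | add x y _ _ hx hy => rw [iterate_map_add, hx, hy]
  | mul x y _ _ hx hy => rw [iterate_map_mul, hx, hy]

lemma qTrace_diff (q : k) (m : ℕ) (hm : 0 < m) (hq : q ^ m = 1) (τ : F2 k ≃+* F2 k)
    (hτ : IsQShiftX q τ) (u : F2 k) : qTrace τ m (τ u - u) = 0 := by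
  have h := Finset.sum_range_sub (fun j => τ^[j] u) m
  simp only [qShift_iterate_order q m hm hq τ hτ, Function.iterate_zero, id, sub_self] at h
  rw [qTrace, ← h]
  exact Finset.sum_congr rfl fun j _ => by
    rw [iterate_map_sub, Function.iterate_succ_apply]

/-- The trace of `k(x,y)` over the action of `τ` takes values in `k(y)(x^m)`. -/
lemma qTrace_mem (q : k) (m : ℕ) (hm : 0 < m) (hq : q ^ m = 1)
    (hmin : ∀ n : ℕ, 0 < n → q ^ n = 1 → m ≤ n) (τ : F2 k ≃+* F2 k)
    (hτ : IsQShiftX q τ) (z : F2 k) : qTrace τ m z ∈ kyxm k m := by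
  have hxm : Fx k ^ m ∈ kyxm k m := IntermediateField.subset_adjoin _ _ (by simp)
  have hz := mem_adjoin_Fx m hm z
  rw [Algebra.adjoin_singleton_eq_range_aeval] at hz
  obtain ⟨p, rfl⟩ := hz
  induction p using Polynomial.induction_on' with
  | add p r hp hr =>
    rw [map_add, qTrace_add]
    exact add_mem hp hr
  | monomial i a =>
    have key : qTrace τ m (aeval (Fx k) (monomial i a)) =
        (a : F2 k) * Fc k (∑ j ∈ Finset.range m, (q ^ i) ^ j) * Fx k ^ i := by
      rw [qTrace, map_sum, Finset.mul_sum, Finset.sum_mul]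
      refine Finset.sum_congr rfl fun j _ => ?_
      have ha : τ^[j] (a : F2 k) = a :=
        Function.iterate_fixed (qShift_fix q m hq τ hτ _ a.2) j
      rw [aeval_monomial, IntermediateField.algebraMap_apply, iterate_map_mul, iterate_map_pow,
        ha, qShift_iterate_Fx q τ hτ, mul_pow, ← map_pow, ← pow_mul, ← pow_mul, mul_comm j i,
        mul_assoc]
    change qTrace τ m (aeval (Fx k) (monomial i a)) ∈ kyxm k m
    rw [key]
    by_cases hi : q ^ i = 1
    · obtain ⟨n, rfl⟩ : m ∣ i := by
        refine Nat.dvd_of_mod_eq_zero (Nat.eq_zero_of_not_pos fun hpos => ?_)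
        refine absurd (Nat.mod_lt i hm) (not_lt.mpr (hmin _ hpos ?_))
        rw [← pow_mod_orderOf, Nat.mod_mod_of_dvd _ (orderOf_dvd_of_pow_eq_one hq),
          pow_mod_orderOf, hi]
      rw [pow_mul (Fx k), ← algebraMap_eq_Fc]
      exact mul_mem (mul_mem a.2 ((kyxm k m).algebraMap_mem _)) (pow_mem hxm n)
    · have h0 : ∑ j ∈ Finset.range m, (q ^ i) ^ j = 0 := by
        rw [geom_sum_eq hi, ← pow_mul, mul_comm, pow_mul, hq, one_pow, sub_self, zero_div]
      rw [h0, map_zero, mul_zero, zero_mul]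
      exact zero_mem _

lemma shifts_commute (q : k) (τ σ : F2 k ≃+* F2 k) (hτ : IsQShiftX q τ) (hσ : IsShiftY σ)
    (z : F2 k) : τ (σ z) = σ (τ z) := by
  refine RingHom.congr_fun (ringHom_ext_F2 ((τ : F2 k →+* F2 k).comp (σ : F2 k →+* F2 k))
    ((σ : F2 k →+* F2 k).comp (τ : F2 k →+* F2 k)) ?_ ?_ ?_) z
  · intro a; simp [hτ.1, hσ.1]
  · simp [hτ.2.2, hσ.1, hσ.2.1]
  · simp [hτ.2.1, hσ.2.2]

end Helpers

/-- Theorem 1, case `∂_y = Δ_y`: let `q ∈ k` satisfy `q^m = 1` with `m`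
minimal, and assume `k` contains all `m`-th roots of unity. Let `f ∈ k(x,y)` with
`f = τ_{x,q}(g) - g + c`, `c ∈ k(y)(x^m)`. Then `f` is exact with respect to
`(τ_{x,q}, σ_y)`, i.e. `f = Δ_{x,q}(u) + Δ_y(v)` for some `u, v ∈ k(x,y)`, iff
`c = Δ_y(d)` for some `d ∈ k(y)(x^m)`. -/
theorem stmt10 {k : Type*} [Field k] [CharZero k]
    (q : k) (m : ℕ) (hm : 0 < m) (hq : q ^ m = 1)
    (hmin : ∀ n : ℕ, 0 < n → q ^ n = 1 → m ≤ n)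
    (hall : Multiset.card ((X ^ m - C 1 : Polynomial k).roots) = m)
    (τ : F2 k ≃+* F2 k) (hτ : IsQShiftX q τ)
    (σy : F2 k ≃+* F2 k) (hσy : IsShiftY σy)
    (f g c : F2 k) (hc : c ∈ kyxm k m) (hf : f = τ g - g + c) :
    (∃ u v : F2 k, f = (τ u - u) + (σy v - v)) ↔
    (∃ d : F2 k, d ∈ kyxm k m ∧ c = σy d - d) := by
  constructor
  · rintro ⟨u, v, huv⟩
    have hm0 : (m : F2 k) ≠ 0 := by
      rw [← map_natCast (Fc k) m]
      exact (_root_.map_ne_zero _).mpr (Nat.cast_ne_zero.mpr hm.ne')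
    have hEc : qTrace τ m c = m * c := by
      have hfix := qShift_fix q m hq τ hτ c hc
      simp [qTrace, Function.iterate_fixed hfix]
    have hEσ : qTrace τ m (σy v) = σy (qTrace τ m v) := by
      have hcomm : Function.Commute τ σy := shifts_commute q τ σy hτ hσy
      rw [qTrace, qTrace, map_sum]
      exact Finset.sum_congr rfl fun j _ => hcomm.iterate_left j v
    have hE := congrArg (qTrace τ m) (hf.symm.trans huv)
    rw [qTrace_add, qTrace_add, qTrace_diff q m hm hq τ hτ, qTrace_diff q m hm hq τ hτ,
      qTrace_sub, hEc, hEσ, zero_add, zero_add] at hE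
    refine ⟨qTrace τ m v / m,
      div_mem (qTrace_mem q m hm hq hmin τ hτ v) (natCast_mem _ m), ?_⟩
    rw [map_div₀, map_natCast, ← sub_div, ← hE, mul_div_cancel_left₀ _ hm0]
  · rintro ⟨d, -, rfl⟩
    exact ⟨g, d, hf⟩
end
end

section
/- Let q ∈ k \ {0} be not a root of unity and let r = Σ_{i=1}^n Σ_{j=1}^{m_i} a_{i,j}/d_i^j be a (τ_{x,q}, σ_y)-reduced rational function, with a_{i,j} ∈ k(x)[y] and d_i ∈ k[x,y] irreducible in distinct (τ_{x,q}, σ_y)-orbits, deg_y(a_{i,j}) < deg_y(d_i). Then r is exact with respect to (Δ_{x,q}, Δ_y) if and only if for each multiplicity j, the rational function r_j = Σ_{i=1}^n a_{i,j}/d_i^j (summing over those i with j ≤ m_i) is exact with respect to (Δ_{x,q}, Δ_y). -/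
/-!
The argument separates multiplicities by means of partial fractions over `K = k(x)`.  Let
`polePart j` be the additive subgroup of `k(x,y) = K(y)` generated by the fractions `b / d ^ (j + 1)`
with `d ∈ K[y]` irreducible and `deg b < deg d`.  Existence and uniqueness of partial fractions say
that `K(y)` is the direct sum of `K[y]` and the groups `polePart j`
(`exists_decomposition`, `eq_zero_of_sum_eq_zero`).

An automorphism of `k(x,y)` fixing `k` with `x ↦ α x`, `y ↦ y + β` restricts to a
degree-preserving automorphism of `K[y]` (`AffineAut.exists_ringEquiv`), so it permutes the
irreducible polynomials and preserves every summand (`AffineAut.map_mem_polePart`).  Both `τ` and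
`σy` are of this kind.  By Gauss's lemma the `j`-th part of `r` lies in `polePart j`, so an equation
`r = (τ u - u) + (σy v - v)` can be read off component by component, which gives one such equation
for each `r_j`.  The converse is additivity.
-/

open Polynomial

noncomputable section

variable (k : Type*) [Field k] [CharZero k]

variable {k}

section

variable {k : Type*} [Field k]

theorem FP_injective : Function.Injective (FP k) :=
  IsFractionRing.injective (Polynomial (RatFunc k)) (F2 k)

theorem FP_C (c : RatFunc k) : FP k (C c) = FKx k c := RatFunc.algebraMap_C c

theorem FP_X : FP k X = Fy k := RatFunc.algebraMap_X

/-! ### Partial fractions graded by multiplicity -/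

/-- The additive group of the rational functions whose partial fraction decomposition over `k(x)`
involves only terms `b / d ^ (j + 1)` with `d` irreducible and `deg b < deg d`.  The exponent is
`j + 1`, so that `j = 0` is the simple-pole part. -/
def polePart (k : Type*) [Field k] (j : ℕ) : AddSubgroup (F2 k) :=
  AddSubgroup.closure {f | ∃ b d : Polynomial (RatFunc k), Irreducible d ∧ b.degree < d.degree ∧
    f = FP k b / FP k d ^ (j + 1)}

theorem mem_polePart {j : ℕ} {b d : Polynomial (RatFunc k)} (hd : Irreducible d)
    (hb : b.degree < d.degree) : FP k b / FP k d ^ (j + 1) ∈ polePart k j :=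
  AddSubgroup.subset_closure ⟨b, d, hd, hb, rfl⟩

/-- A normal form with monic denominators: the finitely supported function `c` sends a monic
irreducible polynomial to the numerator above its `(j + 1)`-st power. -/
theorem exists_finsupp_of_mem_polePart {j : ℕ} {f : F2 k} (hf : f ∈ polePart k j) :
    ∃ c : Polynomial (RatFunc k) →₀ Polynomial (RatFunc k),
      (∀ d ∈ c.support, d.Monic ∧ Irreducible d ∧ (c d).degree < d.degree) ∧
      f = c.sum fun d b => FP k b * (FP k d)⁻¹ ^ (j + 1) := by
  classical
  induction hf using AddSubgroup.closure_induction with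
  | mem f hf =>
    obtain ⟨b, d, hd, hb, rfl⟩ := hf
    have hl : d.leadingCoeff ≠ 0 := leadingCoeff_ne_zero.2 hd.ne_zero
    refine ⟨Finsupp.single (d * C d.leadingCoeff⁻¹) (b * C d.leadingCoeff⁻¹ ^ (j + 1)), ?_, ?_⟩
    · intro e he
      obtain rfl : e = d * C d.leadingCoeff⁻¹ := by
        simpa using Finsupp.support_single_subset he
      refine ⟨monic_mul_leadingCoeff_inv hd.ne_zero, ?_, ?_⟩
      · exact (associated_mul_unit_right d _ (isUnit_C.2 (inv_ne_zero hl).isUnit)).irreducible hd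
      · rw [Finsupp.single_eq_same, degree_mul_leadingCoeff_inv _ hd.ne_zero, ← C_pow]
        rw [degree_mul_C (pow_ne_zero _ (inv_ne_zero hl))]
        exact hb
    · rw [Finsupp.sum_single_index (by simp)]
      have h1 : FP k (C d.leadingCoeff⁻¹) ≠ 0 := by
        rw [Ne, map_eq_zero_iff _ FP_injective, C_eq_zero]
        exact inv_ne_zero hl
      have h2 : FP k d ≠ 0 := by
        rw [Ne, map_eq_zero_iff _ FP_injective]
        exact hd.ne_zero
      rw [map_mul, map_mul, map_pow, mul_inv, mul_pow, inv_pow, inv_pow]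
      field_simp
  | zero => exact ⟨0, by simp, by simp⟩
  | add f g _ _ hf hg =>
    obtain ⟨c, hc, rfl⟩ := hf
    obtain ⟨c', hc', rfl⟩ := hg
    refine ⟨c + c', fun d hd => ?_, ?_⟩
    · have key : ∀ e : Polynomial (RatFunc k) →₀ Polynomial (RatFunc k),
          (∀ d ∈ e.support, d.Monic ∧ Irreducible d ∧ (e d).degree < d.degree) →
          d ≠ 0 → (e d).degree < d.degree := by
        intro e he h0
        by_cases h : d ∈ e.support
        · exact (he d h).2.2
        · rw [Finsupp.notMem_support_iff.1 h, degree_zero]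
          exact bot_lt_iff_ne_bot.2 (degree_ne_bot.2 h0)
      have hd' : d.Monic ∧ Irreducible d := by
        rcases Finset.mem_union.1 (Finsupp.support_add hd) with h | h
        · exact ⟨(hc d h).1, (hc d h).2.1⟩
        · exact ⟨(hc' d h).1, (hc' d h).2.1⟩
      refine ⟨hd'.1, hd'.2, ?_⟩
      exact (degree_add_le _ _).trans_lt
        (max_lt (key c hc hd'.2.ne_zero) (key c' hc' hd'.2.ne_zero))
    · rw [Finsupp.sum_add_index' (by simp) (by intros; simp [add_mul])]
  | neg f _ hf =>
    obtain ⟨c, hc, rfl⟩ := hf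
    refine ⟨-c, fun d hd => ?_, ?_⟩
    · simpa using hc d (by simpa using hd)
    · rw [Finsupp.sum_neg_index (by simp)]
      simp [Finsupp.sum]

/-- Distinct monic irreducible polynomials over a field are coprime. -/
theorem isCoprime_of_monic_irreducible {K : Type*} [Field K] {d e : Polynomial K}
    (hd : d.Monic) (hd' : Irreducible d) (he : e.Monic) (he' : Irreducible e) (h : d ≠ e) :
    IsCoprime d e :=
  (hd'.isCoprime_or_dvd e).resolve_right fun hde =>
    h (eq_of_monic_of_associated hd he (hd'.associated_of_dvd he' hde))

/-- Independence of `k(x)[y]` and the groups `polePart k j`: uniqueness of partial fractions. -/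
theorem eq_zero_of_sum_eq_zero {N : ℕ} {p : Polynomial (RatFunc k)} {w : ℕ → F2 k}
    (hw : ∀ j, w j ∈ polePart k j) (h : FP k p + ∑ j : Fin N, w j = 0) (j : Fin N) :
    w j = 0 := by
  classical
  choose c hc hwc using fun j => exists_finsupp_of_mem_polePart (hw j)
  set s : Finset (Polynomial (RatFunc k)) :=
    (Finset.univ : Finset (Fin N)).biUnion fun j => (c j).support with hs
  have hsm : ∀ d ∈ s, d.Monic ∧ Irreducible d := by
    intro d hd
    obtain ⟨i, -, hi⟩ := Finset.mem_biUnion.1 hd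
    exact ⟨(hc i d hi).1, (hc i d hi).2.1⟩
  have hwj : ∀ i : Fin N, w i = ∑ d ∈ s, FP k (c i d) * (FP k d)⁻¹ ^ (i.1 + 1) := by
    intro i
    rw [hwc i]
    exact Finsupp.sum_of_support_subset _
      (Finset.subset_biUnion_of_mem (fun j : Fin N => (c j).support) (Finset.mem_univ i)) _
      (by simp)
  have huniq := quo_add_sum_rem_mul_pow_inverse_unique (K := F2 k) (s := s) (g := id)
    (n := fun _ => N) (gi := fun d => (FP k d)⁻¹) (q₁ := p) (q₂ := 0)
    (r₁ := fun d i => c i d) (r₂ := fun _ _ => 0)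
    (fun d hd => (hsm d hd).1)
    (fun d hd e he hde =>
      isCoprime_of_monic_irreducible (hsm d hd).1 (hsm d hd).2 (hsm e he).1 (hsm e he).2 hde)
    (fun d hd => inv_mul_cancel₀
      ((map_ne_zero_iff _ FP_injective).2 (hsm d hd).2.ne_zero))
    (fun d hd i => by
      by_cases h : d ∈ (c i).support
      · exact (hc i d h).2.2
      · rw [Finsupp.notMem_support_iff.1 h, degree_zero]
        exact bot_lt_iff_ne_bot.2 (degree_ne_bot.2 (hsm d hd).2.ne_zero))
    (fun d hd i => by
      rw [degree_zero]
      exact bot_lt_iff_ne_bot.2 (degree_ne_bot.2 (hsm d hd).2.ne_zero))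
    (by
      have h' := h
      simp_rw [hwj] at h'
      rw [Finset.sum_comm] at h'
      simpa [FP] using h')
  rw [hwj j]
  refine Finset.sum_eq_zero fun d hd => ?_
  have hcd : c j d = 0 := congrFun (huniq.2 d hd) j
  rw [hcd, map_zero, zero_mul]

/-- Existence of partial fractions.  The number of components is allowed to be any sufficiently
large `N`, so that several rational functions can be decomposed with a common `N`. -/
theorem exists_decomposition (f : F2 k) :
    ∃ N₀ : ℕ, ∀ N ≥ N₀, ∃ (p : Polynomial (RatFunc k)) (w : ℕ → F2 k),
      (∀ j, w j ∈ polePart k j) ∧ f = FP k p + ∑ j : Fin N, w j := by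
  classical
  let S := UniqueFactorizationMonoid.normalizedFactors f.denom
  refine ⟨S.card, fun N hN => ?_⟩
  have hsm : ∀ d ∈ S.toFinset, d.Monic ∧ Irreducible d := by
    intro d hd
    have hd := Multiset.mem_toFinset.1 hd
    have hi := UniqueFactorizationMonoid.irreducible_of_normalized_factor d hd
    refine ⟨?_, hi⟩
    rw [← UniqueFactorizationMonoid.normalize_normalized_factor d hd]
    exact monic_normalize hi.ne_zero
  have hdvd : f.denom ∣ ∏ d ∈ S.toFinset, d ^ N := by
    refine (UniqueFactorizationMonoid.prod_normalizedFactors f.denom_ne_zero).symm.dvd.trans ?_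
    rw [Finset.prod_multiset_count]
    exact Finset.prod_dvd_prod_of_dvd _ _ fun d _ =>
      pow_dvd_pow _ ((Multiset.count_le_card _ _).trans hN)
  obtain ⟨e, he⟩ := hdvd
  have hne : ∀ d ∈ S.toFinset, FP k d ≠ 0 := fun d hd =>
    (map_ne_zero_iff _ FP_injective).2 (hsm d hd).2.ne_zero
  obtain ⟨p, r, hr, h⟩ := mul_prod_pow_inverse_eq_quo_add_sum_rem_mul_pow_inverse (K := F2 k)
    (s := S.toFinset) (f.num * e) (g := id) (fun d hd => (hsm d hd).1)
    (fun d hd e he hde =>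
      isCoprime_of_monic_irreducible (hsm d hd).1 (hsm d hd).2 (hsm e he).1 (hsm e he).2 hde)
    (fun _ => N) (gi := fun d => (FP k d)⁻¹) (fun d hd => inv_mul_cancel₀ (hne d hd))
  have hf : f = FP k (f.num * e) * ∏ d ∈ S.toFinset, (FP k d)⁻¹ ^ N := by
    have hprod : ∏ d ∈ S.toFinset, FP k d ^ N ≠ 0 :=
      Finset.prod_ne_zero_iff.2 fun d hd => pow_ne_zero _ (hne d hd)
    have he' : ∏ d ∈ S.toFinset, FP k d ^ N = FP k f.denom * FP k e := by
      rw [← map_mul, ← he, map_prod]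
      simp
    have hfd : FP k f.denom ≠ 0 := (map_ne_zero_iff _ FP_injective).2 f.denom_ne_zero
    simp_rw [inv_pow]
    rw [Finset.prod_inv_distrib, ← div_eq_mul_inv, eq_div_iff hprod, he', map_mul]
    have hnd : FP k f.num / FP k f.denom = f := f.num_div_denom
    rw [← mul_assoc, ← (div_eq_iff hfd).1 hnd]
  refine ⟨p, fun j => if hj : j < N then
    ∑ d ∈ S.toFinset, FP k (r d ⟨j, hj⟩) / FP k d ^ (j + 1) else 0, fun j => ?_, ?_⟩
  · dsimp only
    split_ifs with hj
    · exact AddSubgroup.sum_mem _ fun d hd => mem_polePart (hsm d hd).2 (hr d hd _)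
    · exact zero_mem _
  · refine hf.trans (h.trans ?_)
    rw [Finset.sum_comm]
    simp [FP, div_eq_mul_inv]

/-! ### Automorphisms scaling `x` and translating `y` -/

/-- The automorphism `φ` of `k(x,y)` fixes `k` and maps `x ↦ α x`, `y ↦ y + β`. -/
structure AffineAut (α β : k) (φ : F2 k ≃+* F2 k) : Prop where
  map_c : ∀ c, φ (Fc k c) = Fc k c
  map_x : φ (Fx k) = Fc k α * Fx k
  map_y : φ (Fy k) = Fy k + Fc k β

namespace AffineAut

variable {α β : k} {φ : F2 k ≃+* F2 k}

theorem symm (h : AffineAut α β φ) (hα : α ≠ 0) : AffineAut α⁻¹ (-β) φ.symm where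
  map_c c := by rw [RingEquiv.symm_apply_eq, h.map_c]
  map_x := by
    rw [RingEquiv.symm_apply_eq, map_mul, h.map_c, h.map_x, ← mul_assoc, ← map_mul,
      inv_mul_cancel₀ hα, map_one, one_mul]
  map_y := by
    rw [RingEquiv.symm_apply_eq, map_add, h.map_c, h.map_y, map_neg, add_neg_cancel_right]

theorem exists_FKx (h : AffineAut α β φ) (c : RatFunc k) :
    ∃ c', φ (FKx k c) = FKx k c' := by
  have hpoly : ∀ p : Polynomial k, ∃ c',
      φ (FKx k (algebraMap _ (RatFunc k) p)) = FKx k c' := by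
    intro p
    induction p using Polynomial.induction_on' with
    | add p q hp hq =>
      obtain ⟨a, ha⟩ := hp
      obtain ⟨b, hb⟩ := hq
      exact ⟨a + b, by simp only [map_add, ha, hb]⟩
    | monomial n a =>
      refine ⟨RatFunc.C a * (RatFunc.C α * RatFunc.X) ^ n, ?_⟩
      have h1 : FKx k (RatFunc.C a) = Fc k a := rfl
      have h2 : FKx k RatFunc.X = Fx k := rfl
      have h3 : FKx k (RatFunc.C α) = Fc k α := rfl
      rw [← C_mul_X_pow_eq_monomial]
      simp only [map_mul, map_pow, RatFunc.algebraMap_C, RatFunc.algebraMap_X, h1, h2, h3,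
        h.map_c, h.map_x]
  obtain ⟨a, ha⟩ := hpoly c.num
  obtain ⟨b, hb⟩ := hpoly c.denom
  refine ⟨a / b, ?_⟩
  rw [← c.num_div_denom, map_div₀, map_div₀, map_div₀, ha, hb]

theorem exists_FP (h : AffineAut α β φ) (p : Polynomial (RatFunc k)) :
    ∃ p', φ (FP k p) = FP k p' ∧ p'.degree ≤ p.degree := by
  choose f hf using h.exists_FKx
  refine ⟨∑ i ∈ p.support, C (f (p.coeff i)) * (X + C (RatFunc.C β)) ^ i, ?_, ?_⟩
  · have hβ : FKx k (RatFunc.C β) = Fc k β := rfl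
    conv_lhs => rw [p.as_sum_support_C_mul_X_pow]
    simp only [map_sum, map_mul, map_pow, map_add, FP_C, FP_X, hf, h.map_y, hβ]
  · refine (degree_sum_le _ _).trans (Finset.sup_le fun i hi => ?_)
    refine (degree_mul_le _ _).trans ((add_le_add_left degree_C_le _).trans ?_)
    rw [zero_add, degree_pow, degree_X_add_C, nsmul_one]
    exact le_degree_of_mem_supp i hi

/-- The restriction to `k(x)[y]` is an automorphism preserving the degree in `y`. -/
theorem exists_ringEquiv (h : AffineAut α β φ) (hα : α ≠ 0) :
    ∃ e : Polynomial (RatFunc k) ≃+* Polynomial (RatFunc k),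
      ∀ p, φ (FP k p) = FP k (e p) ∧ (e p).degree = p.degree := by
  choose f hf hfd using h.exists_FP
  choose g hg hgd using (h.symm hα).exists_FP
  have hgf : ∀ p, g (f p) = p := fun p => FP_injective <| by
    rw [← hg, ← hf, RingEquiv.symm_apply_apply]
  have hfg : ∀ p, f (g p) = p := fun p => FP_injective <| by
    rw [← hf, ← hg, RingEquiv.apply_symm_apply]
  let e : Polynomial (RatFunc k) ≃+* Polynomial (RatFunc k) :=
    { toFun := f
      invFun := g
      left_inv := hgf
      right_inv := hfg
      map_mul' := fun p q => FP_injective <| by simp only [map_mul, ← hf]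
      map_add' := fun p q => FP_injective <| by simp only [map_add, ← hf] }
  refine ⟨e, fun p => ⟨hf p, ?_⟩⟩
  refine le_antisymm (hfd p) ?_
  have := hgd (f p)
  rwa [hgf] at this

theorem map_mem_polePart (h : AffineAut α β φ) (hα : α ≠ 0) {j : ℕ} {f : F2 k}
    (hf : f ∈ polePart k j) : φ f ∈ polePart k j := by
  obtain ⟨e, he⟩ := h.exists_ringEquiv hα
  induction hf using AddSubgroup.closure_induction with
  | mem f hf =>
    obtain ⟨b, d, hd, hb, rfl⟩ := hf
    rw [map_div₀, map_pow, (he b).1, (he d).1]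
    refine mem_polePart ((MulEquiv.irreducible_iff e).2 hd) ?_
    rwa [(he b).2, (he d).2]
  | zero => rw [map_zero]; exact zero_mem _
  | add f g _ _ hf hg => rw [map_add]; exact add_mem hf hg
  | neg f _ hf => rw [map_neg]; exact neg_mem hf

end AffineAut

/-! ### Membership of the given fractions and the separation of multiplicities -/

/-- If `d` has degree `0` in `y`, the degree bound forces `a = 0`; otherwise `d` stays irreducible
over `k(x)` by Gauss's lemma. -/
theorem div_FPP_mem_polePart {j : ℕ} {a : Polynomial (RatFunc k)} {d : Polynomial (Polynomial k)}
    (hd : Irreducible d) (ha : a.degree < d.degree) :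
    FP k a / FPP k d ^ (j + 1) ∈ polePart k j := by
  have hdeg : (PP k d).degree = d.degree :=
    degree_map_eq_of_injective (IsFractionRing.injective (Polynomial k) (RatFunc k)) d
  by_cases h0 : d.natDegree = 0
  · have : a = 0 := by
      rw [degree_eq_natDegree hd.ne_zero, h0] at ha
      exact degree_eq_bot.1 (Nat.WithBot.lt_zero_iff.1 (by simpa using ha))
    rw [this, map_zero, zero_div]
    exact zero_mem _
  · have hirr : Irreducible (PP k d) :=
      ((hd.isPrimitive h0).irreducible_iff_irreducible_map_fraction_map
        (K := RatFunc k)).1 hd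
    exact mem_polePart hirr (hdeg ▸ ha)

end

/-- let `q ∈ k \ {0}` not be a root of unity and let
`r = Σᵢ Σⱼ a_{i,j}/dᵢ^j` be `(τ_{x,q}, σ_y)`-reduced, with `a_{i,j} ∈ k(x)[y]`,
`dᵢ ∈ k[x,y]` irreducible in pairwise distinct `(τ_{x,q}, σ_y)`-orbits and
`deg_y(a_{i,j}) < deg_y(dᵢ)`. Then `r` is exact with respect to `(Δ_{x,q}, Δ_y)` iff for
each multiplicity `j`, the rational function `r_j = Σ_{i : j ≤ mᵢ} a_{i,j}/dᵢ^j` is exact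
with respect to `(Δ_{x,q}, Δ_y)`. -/
theorem stmt16 {k : Type*} [Field k] [CharZero k]
    (q : k) (hq : q ≠ 0) (hqru : NotRootOfUnity q)
    (τ : F2 k ≃+* F2 k) (hτ : IsQShiftX q τ)
    (σy : F2 k ≃+* F2 k) (hσy : IsShiftY σy)
    (n : ℕ) (m : Fin n → ℕ)
    (a : Fin n → ℕ → Polynomial (RatFunc k))
    (dd : Fin n → Polynomial (Polynomial k)) (hirr : ∀ i, Irreducible (dd i))
    (hdeg : ∀ i j, j < m i → (a i j).degree < (dd i).degree)
    (horb : ∀ i i' : Fin n, ∀ s t : ℤ,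
      FPP k (dd i) = (τ ^ s) ((σy ^ t) (FPP k (dd i'))) → i = i')
    (r : F2 k)
    (hr : r = ∑ i, ∑ j ∈ Finset.range (m i), FP k (a i j) / FPP k (dd i) ^ (j + 1)) :
    (∃ u v : F2 k, r = (τ u - u) + (σy v - v)) ↔
    (∀ j : ℕ, ∃ u v : F2 k,
      ∑ i ∈ Finset.univ.filter (fun i : Fin n => j < m i),
        FP k (a i j) / FPP k (dd i) ^ (j + 1) = (τ u - u) + (σy v - v)) := by
  have hτ' : AffineAut q 0 τ := ⟨hτ.1, hτ.2.2, by rw [hτ.2.1, map_zero, add_zero]⟩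
  have hσ' : AffineAut 1 1 σy :=
    ⟨hσy.1, by rw [hσy.2.1, map_one, one_mul], by rw [hσy.2.2, map_one]⟩
  set R : ℕ → F2 k := fun j => ∑ i ∈ Finset.univ.filter (fun i : Fin n => j < m i),
    FP k (a i j) / FPP k (dd i) ^ (j + 1) with hR
  have hRmem : ∀ j, R j ∈ polePart k j := fun j => AddSubgroup.sum_mem _ fun i hi =>
    div_FPP_mem_polePart (hirr i) (hdeg i j (Finset.mem_filter.1 hi).2)
  have hsum : ∀ N, (∀ i, m i ≤ N) → r = ∑ j : Fin N, R j := by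
    intro N hN
    rw [hr, Fin.sum_univ_eq_sum_range R N]
    simp only [hR, Finset.sum_filter]
    rw [Finset.sum_comm]
    refine Finset.sum_congr rfl fun i _ => ?_
    rw [← Finset.sum_filter]
    refine Finset.sum_congr ?_ fun _ _ => rfl
    ext j
    simp only [Finset.mem_range, Finset.mem_filter]
    exact ⟨fun h => ⟨h.trans_le (hN i), h⟩, fun h => h.2⟩
  have hM : ∀ i, m i ≤ Finset.univ.sup m := fun i => Finset.le_sup (Finset.mem_univ i)
  constructor
  · rintro ⟨u, v, huv⟩ j
    obtain ⟨Nu, hu⟩ := exists_decomposition u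
    obtain ⟨Nv, hv⟩ := exists_decomposition v
    set N := Nu + Nv + Finset.univ.sup m + (j + 1) with hN
    obtain ⟨pu, U, hU, hu⟩ := hu N (by omega)
    obtain ⟨pv, V, hV, hv⟩ := hv N (by omega)
    have hrN := hsum N fun i => (hM i).trans (by omega)
    obtain ⟨eτ, heτ⟩ := hτ'.exists_ringEquiv hq
    obtain ⟨eσ, heσ⟩ := hσ'.exists_ringEquiv one_ne_zero
    refine ⟨U j, V j, ?_⟩
    have key := eq_zero_of_sum_eq_zero (N := N)
      (p := -(eτ pu - pu + (eσ pv - pv)))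
      (w := fun j => R j - (τ (U j) - U j + (σy (V j) - V j)))
      (fun j => sub_mem (hRmem j) (add_mem
        (sub_mem (hτ'.map_mem_polePart hq (hU j)) (hU j))
        (sub_mem (hσ'.map_mem_polePart one_ne_zero (hV j)) (hV j))))
      (by
        have h := huv
        rw [hrN, hu, hv] at h
        simp only [map_add, map_sum, (heτ _).1, (heσ _).1] at h
        simp only [Finset.sum_sub_distrib, Finset.sum_add_distrib, map_neg, map_add, map_sub]
        rw [h]
        ring)
      ⟨j, by omega⟩
    exact sub_eq_zero.1 key
  · intro h
    choose u v huv using h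
    refine ⟨∑ j : Fin (Finset.univ.sup m), u j, ∑ j : Fin (Finset.univ.sup m), v j, ?_⟩
    rw [hsum _ hM, map_sum, map_sum, ← Finset.sum_sub_distrib, ← Finset.sum_sub_distrib,
      ← Finset.sum_add_distrib]
    exact Finset.sum_congr rfl fun j _ => huv j
end
end
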